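/- arXiv:1702.02327 — 3 statements merged into one kernel-verified Lean document; each statement's English description precedes it below -/
import Mathlib

section
/- Let q = p^e with p prime, let 2 ≤ n < q with p ∤ n, let b ∈ F_q, and let 0 ≤ k ≤ n. The number of tuples (a_2,...,a_n) ∈ F_q^{n-1} such that f(x) = x^n - b x^{n-1} + a_2 x^{n-2} + ... + a_n has exactly k distinct roots in F_q equals q^{n-k-1} * C(q,k) * Σ_{i=0}^{n-k} (-1)^i C(q-k, i) q^{-i}. -/
open Polynomial Finset

lemma aux_inv (n k m : ℕ) (hk : k ≤ n) (hm : m ≤ n) :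
    ∑ i ∈ range (n - k + 1), (-1 : ℚ) ^ i * ((k + i).choose k : ℚ) * (m.choose (k + i) : ℚ)
      = if m = k then 1 else 0 := by
  have h1 : ∀ i, (-1 : ℚ) ^ i * ((k + i).choose k : ℚ) * (m.choose (k + i) : ℚ)
      = m.choose k * ((-1 : ℚ) ^ i * ((m - k).choose i)) := by
    intro i
    have := Nat.choose_mul (n := m) (k := k + i) (s := k) (by omega)
    rw [Nat.add_sub_cancel_left] at this
    have h2 : (m.choose (k + i) : ℚ) * ((k + i).choose k) = m.choose k * (m - k).choose i := by
      exact_mod_cast this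
    linear_combination (-1 : ℚ) ^ i * h2
  rw [sum_congr rfl (fun i _ => h1 i), ← mul_sum]
  by_cases hkm : k ≤ m
  · have h3 : ∑ i ∈ range (n - k + 1), ((-1 : ℚ) ^ i * ((m - k).choose i))
        = ∑ i ∈ range (m - k + 1), ((-1 : ℚ) ^ i * ((m - k).choose i)) := by
      symm
      apply sum_subset
      · intro i hi
        simp only [mem_range] at *
        omega
      · intro i _ hi
        simp only [mem_range] at hi
        rw [Nat.choose_eq_zero_of_lt (by omega)]
        simp
    have h4 := Int.alternating_sum_range_choose (n := m - k)
    have h5 : ∑ i ∈ range (m - k + 1), ((-1 : ℚ) ^ i * ((m - k).choose i))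
        = if m - k = 0 then 1 else 0 := by
      exact_mod_cast congrArg (Int.cast : ℤ → ℚ) h4
    rw [h3, h5]
    by_cases h : m = k
    · simp [h]
    · rw [if_neg h, if_neg (by omega), mul_zero]
  · rw [Nat.choose_eq_zero_of_lt (by omega), if_neg (by omega)]
    simp

section
variable {F : Type*} [Field F] [Fintype F] [DecidableEq F]

noncomputable def PP (m : ℕ) (b : F) (a : Fin m → F) : F[X] := X ^ (m + 1) - C b * X ^ m + ofFn m a

lemma PP_eval (m : ℕ) (b : F) (a : Fin m → F) (x : F) :
    (PP m b a).eval x = x ^ (m + 1) - b * x ^ m + ∑ i : Fin m, a i * x ^ (i : ℕ) := by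
  simp [PP, ofFn_eq_sum_monomial, eval_finsetSum]

lemma PP_coeff_lt (m : ℕ) (b : F) (a : Fin m → F) (i : ℕ) (hi : i < m) :
    (PP m b a).coeff i = a ⟨i, hi⟩ := by
  simp [PP, coeff_X_pow, ofFn_coeff_eq_val_of_lt a hi, hi.ne, (show i ≠ m + 1 by omega)]

lemma PP_coeff_m (m : ℕ) (b : F) (a : Fin m → F) :
    (PP m b a).coeff m = -b := by
  simp [PP, coeff_X_pow, ofFn_coeff_eq_zero_of_ge a le_rfl]

lemma PP_coeff_m1 (m : ℕ) (b : F) (a : Fin m → F) :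
    (PP m b a).coeff (m + 1) = 1 := by
  simp [PP, coeff_X_pow, ofFn_coeff_eq_zero_of_ge a (show m ≤ m + 1 by omega)]

lemma PP_coeff_gt (m : ℕ) (b : F) (a : Fin m → F) (i : ℕ) (hi : m + 1 < i) :
    (PP m b a).coeff i = 0 := by
  simp [PP, coeff_X_pow, ofFn_coeff_eq_zero_of_ge a (show m ≤ i by omega), hi.ne',
    (show i ≠ m by omega)]

lemma PP_natDegree (m : ℕ) (b : F) (a : Fin m → F) : (PP m b a).natDegree = m + 1 := by
  apply natDegree_eq_of_le_of_coeff_ne_zero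
  · rw [natDegree_le_iff_coeff_eq_zero]
    exact fun i hi => PP_coeff_gt m b a i hi
  · rw [PP_coeff_m1]; exact one_ne_zero

lemma PP_monic (m : ℕ) (b : F) (a : Fin m → F) : (PP m b a).Monic := by
  rw [Monic, leadingCoeff, PP_natDegree, PP_coeff_m1]

noncomputable def RR (m : ℕ) (b : F) (a : Fin m → F) : Finset F := univ.filter fun x => (PP m b a).eval x = 0

lemma RR_card_le (m : ℕ) (b : F) (a : Fin m → F) : (RR m b a).card ≤ m + 1 := by
  rw [← PP_natDegree m b a]
  apply card_le_degree_of_subset_roots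
  intro x hx
  rw [mem_roots (PP_monic m b a).ne_zero]
  simpa [RR] using hx

/-- double counting -/
lemma double_count (m : ℕ) (b : F) (j : ℕ) :
    ∑ a : Fin m → F, (RR m b a).card.choose j
      = ∑ S ∈ powersetCard j (univ : Finset F), (univ.filter fun a : Fin m → F => S ⊆ RR m b a).card := by
  simp_rw [card_filter]
  rw [sum_comm]
  apply sum_congr rfl
  intro a _
  rw [← card_filter, ← card_powersetCard]
  congr 1
  ext S
  simp [mem_powersetCard, and_comm]

lemma count_small (m : ℕ) (b : F) (S : Finset F) (hS : S.card ≤ m) :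
    (univ.filter fun a : Fin m → F => S ⊆ RR m b a).card = Fintype.card F ^ (m - S.card) := by
  let L : (Fin m → F) →ₗ[F] (S → F) :=
    LinearMap.pi fun s => (Polynomial.leval (s : F)) ∘ₗ (ofFn m)
  have hL : ∀ a s, L a s = (ofFn m a).eval (s : F) := fun a s => rfl
  have hsurj : Function.Surjective L := by
    intro g
    let g' : F → F := fun x => if h : x ∈ S then g ⟨x, h⟩ else 0
    let Q := Lagrange.interpolate S id g'
    have hQd : Q.degree < m := lt_of_lt_of_le
      (Lagrange.degree_interpolate_lt (v := id) g' (Set.injOn_id _)) (by exact_mod_cast hS)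
    refine ⟨fun i => Q.coeff i, ?_⟩
    have : ofFn m (fun i : Fin m => Q.coeff i) = Q := by
      ext i
      by_cases hi : i < m
      · rw [ofFn_coeff_eq_val_of_lt _ hi]
      · rw [ofFn_coeff_eq_zero_of_ge _ (by omega)]
        rw [degree_lt_iff_coeff_zero] at hQd
        exact (hQd i (by omega)).symm
    ext s
    rw [hL, this]
    have := Lagrange.eval_interpolate_at_node (v := id) g' (Set.injOn_id _) s.2
    have hg' : g' s = g s := by simp [g']
    rw [← hg']
    exact this
  obtain ⟨a0, ha0⟩ := hsurj (fun s => -((s : F) ^ (m + 1) - b * (s : F) ^ m))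
  have : Fintype (LinearMap.ker L) := Fintype.ofFinite _
  have hker : Fintype.card (LinearMap.ker L) = Fintype.card F ^ (m - S.card) := by
    rw [Module.card_eq_pow_finrank (K := F)]
    have h := L.finrank_range_add_finrank_ker
    rw [LinearMap.range_eq_top.2 hsurj, finrank_top] at h
    simp at h
    congr 1
    omega
  rw [← hker, ← Fintype.card_coe]
  have key : ∀ a, S ⊆ RR m b a ↔ a - a0 ∈ LinearMap.ker L := by
    intro a
    rw [LinearMap.mem_ker, map_sub, sub_eq_zero, ha0, funext_iff]
    simp only [hL, Subtype.forall]
    apply forall₂_congr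
    intro x hx
    simp only [RR, mem_filter, mem_univ, true_and, PP, eval_add, eval_sub, eval_pow, eval_X,
      eval_mul, eval_C]
    rw [add_comm, add_eq_zero_iff_eq_neg]
  refine Fintype.card_congr ⟨fun a => ⟨a.1 - a0, (key _).1 (mem_filter.1 a.2).2⟩,
    fun v => ⟨v.1 + a0, by simp [key]⟩, fun a => by simp, fun v => by simp⟩

lemma count_top (m : ℕ) (b : F) (S : Finset F) (hS : S.card = m + 1) :
    (univ.filter fun a : Fin m → F => S ⊆ RR m b a).card = if ∑ s ∈ S, s = b then 1 else 0 := by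
  set g : F[X] := ∏ s ∈ S, (X - C s) with hg
  have gm : g.Monic := monic_prod_of_monic _ _ fun s _ => monic_X_sub_C s
  have gd : g.natDegree = m + 1 := by
    rw [hg, natDegree_prod_of_monic _ _ fun s _ => monic_X_sub_C s]; simp [hS]
  have gc : g.coeff m = -∑ s ∈ S, s := by
    have := prod_X_sub_C_coeff_card_pred S (fun s : F => s) (by omega)
    rwa [hS] at this
  have ge : ∀ s ∈ S, g.eval s = 0 := by
    intro s hs
    rw [hg, eval_prod, prod_eq_zero hs]
    simp
  have key : ∀ a, S ⊆ RR m b a ↔ PP m b a = g := by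
    intro a
    constructor
    · intro h
      have hd : (PP m b a).degree = (m + 1 : ℕ) := by
        rw [degree_eq_natDegree (PP_monic m b a).ne_zero, PP_natDegree]
      apply eq_of_degree_le_of_eval_finset_eq S
      · rw [hd, hS]
      · rw [hd, degree_eq_natDegree gm.ne_zero, gd]
      · rw [(PP_monic m b a).leadingCoeff, gm.leadingCoeff]
      · intro s hs
        rw [ge s hs]
        simpa [RR] using h hs
    · intro h s hs
      simp [RR, h, ge s hs]
  simp_rw [key]
  split_ifs with hb
  · rw [card_eq_one]
    refine ⟨fun i => g.coeff i, ?_⟩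
    ext a
    simp only [mem_filter, mem_univ, true_and, mem_singleton]
    constructor
    · intro h
      ext i
      rw [← h, PP_coeff_lt m b a i i.2]
    · rintro rfl
      ext i
      rcases lt_trichotomy i m with hi | hi | hi
      · rw [PP_coeff_lt _ _ _ _ hi]
      · rw [hi, PP_coeff_m, gc, hb]
      · rcases (show i = m + 1 ∨ m + 1 < i by omega) with hi | hi
        · rw [hi, PP_coeff_m1, ← gd]; exact gm.coeff_natDegree.symm
        · rw [PP_coeff_gt _ _ _ _ hi, coeff_eq_zero_of_natDegree_lt (by omega)]
  · rw [card_eq_zero, filter_eq_empty_iff]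
    intro a _ h
    apply hb
    rw [← h, PP_coeff_m] at gc
    exact (neg_injective gc).symm

lemma subset_sum_count (n : ℕ) (hn : (n : F) ≠ 0) (b : F) :
    Fintype.card F * ((powersetCard n (univ : Finset F)).filter fun S => ∑ s ∈ S, s = b).card
      = (Fintype.card F).choose n := by
  have key : ∀ c : F, ((powersetCard n (univ : Finset F)).filter fun S => ∑ s ∈ S, s = c).card
      = ((powersetCard n (univ : Finset F)).filter fun S => ∑ s ∈ S, s = b).card := by
    intro c
    have hsum : ∀ (S : Finset F) (t : F), S.card = n →
        ∑ s ∈ S.map (Equiv.addRight t).toEmbedding, s = ∑ s ∈ S, s + n * t := by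
      intro S t h
      simp [sum_map, sum_add_distrib, h]
    refine card_bij' (fun S _ => S.map (Equiv.addRight ((b - c) / n)).toEmbedding)
      (fun S _ => S.map (Equiv.addRight ((c - b) / n)).toEmbedding) ?_ ?_ ?_ ?_
    · intro S h
      simp only [mem_filter, mem_powersetCard, subset_univ, true_and, card_map] at h ⊢
      refine ⟨h.1, ?_⟩
      rw [hsum _ _ h.1, h.2]; field_simp; ring
    · intro S h
      simp only [mem_filter, mem_powersetCard, subset_univ, true_and, card_map] at h ⊢
      refine ⟨h.1, ?_⟩
      rw [hsum _ _ h.1, h.2]; field_simp; ring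
    · intro S h
      ext x
      simp
      ring_nf
    · intro S h
      ext x
      simp
      ring_nf
  have h := card_eq_sum_card_fiberwise (s := powersetCard n (univ : Finset F)) (t := univ)
    (f := fun S => ∑ s ∈ S, s) (fun _ _ => by simp)
  rw [card_powersetCard, sum_congr rfl (fun c _ => key c)] at h
  simp only [sum_const, smul_eq_mul, card_univ] at h
  exact h.symm

lemma moment (m : ℕ) (hn : ((m + 1 : ℕ) : F) ≠ 0) (b : F) (j : ℕ) (hj : j ≤ m + 1) :
    ∑ a : Fin m → F, ((RR m b a).card.choose j : ℚ)
      = (Fintype.card F).choose j * (Fintype.card F : ℚ) ^ ((m : ℤ) - j) := by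
  have hq : (Fintype.card F : ℚ) ≠ 0 := by
    exact_mod_cast Fintype.card_ne_zero
  have h := double_count m b j
  rcases (show j ≤ m ∨ j = m + 1 by omega) with hj | hj
  · have h0 : ∀ S ∈ powersetCard j (univ : Finset F),
        (univ.filter fun a : Fin m → F => S ⊆ RR m b a).card = Fintype.card F ^ (m - j) := by
      intro S hS
      rw [count_small m b S (by rw [(mem_powersetCard.1 hS).2]; exact hj),
        (mem_powersetCard.1 hS).2]
    rw [sum_congr rfl h0] at h
    simp only [sum_const, smul_eq_mul, card_powersetCard, card_univ] at h
    rw [show (m : ℤ) - j = ((m - j : ℕ) : ℤ) by omega, zpow_natCast]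
    exact_mod_cast h
  · subst hj
    rw [sum_congr rfl (fun S hS => count_top m b S (mem_powersetCard.1 hS).2), ← card_filter] at h
    have h2 := subset_sum_count (m + 1) hn b
    rw [← h] at h2
    rw [← h2]
    push_cast
    rw [show (m : ℤ) - (m + 1) = -1 by ring, zpow_neg_one]
    field_simp

end

theorem stmt_4 (p e q n k : ℕ) (hp : p.Prime) (he : 0 < e) (hq : q = p ^ e)
    (F : Type*) [Field F] [Fintype F] (hF : Fintype.card F = q) (hchar : CharP F p)
    (hn2 : 2 ≤ n) (hnq : n < q) (hpn : ¬ p ∣ n) (b : F) (hk : k ≤ n) :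
    (Nat.card {a : Fin (n - 1) → F //
        Nat.card {α : F //
          α ^ n - b * α ^ (n - 1) + ∑ i : Fin (n - 1), a i * α ^ (i : ℕ) = 0} = k} : ℚ)
      = (q : ℚ) ^ ((n : ℤ) - k - 1) * (q.choose k) *
        ∑ i ∈ Finset.range (n - k + 1),
          (-1 : ℚ) ^ i * ((q - k).choose i) * (q : ℚ) ^ (-(i : ℤ)) := by
  classical
  obtain ⟨m, rfl⟩ : ∃ m, n = m + 1 := ⟨n - 1, by omega⟩
  have hn0 : ((m + 1 : ℕ) : F) ≠ 0 := by
    rw [Ne, CharP.cast_eq_zero_iff F p]; exact hpn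
  have hq0 : (q : ℚ) ≠ 0 := by
    have : q ≠ 0 := by omega
    exact_mod_cast this
  have h1 : ∀ a : Fin m → F, Nat.card {α : F //
      α ^ (m + 1) - b * α ^ m + ∑ i : Fin m, a i * α ^ (i : ℕ) = 0} = (RR m b a).card := by
    intro a
    rw [Nat.card_eq_fintype_card, Fintype.card_subtype]
    simp only [RR, PP_eval]
  change (Nat.card {a : Fin m → F // Nat.card {α : F //
      α ^ (m + 1) - b * α ^ m + ∑ i : Fin m, a i * α ^ (i : ℕ) = 0} = k} : ℚ) = _
  simp only [h1]
  rw [Nat.card_eq_fintype_card, Fintype.card_subtype, card_filter]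
  push_cast
  rw [sum_congr rfl (fun a _ => (aux_inv (m + 1) k _ hk (RR_card_le m b a)).symm), sum_comm, mul_sum]
  apply sum_congr rfl
  intro i hi
  rw [mem_range] at hi
  rw [← mul_sum, moment m hn0 b (k + i) (by omega), hF]
  have hc := Nat.choose_mul (n := q) (k := k + i) (s := k) (by omega)
  rw [Nat.add_sub_cancel_left] at hc
  have h2 : (q.choose (k + i) : ℚ) * ((k + i).choose k) = q.choose k * (q - k).choose i := by
    exact_mod_cast hc
  have h3 : (q : ℚ) ^ ((m : ℤ) - (k + i : ℕ))
      = (q : ℚ) ^ (((m : ℤ) + 1) - k - 1) * (q : ℚ) ^ (-(i : ℤ)) := by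
    rw [← zpow_add₀ hq0]
    congr 1
    push_cast
    ring
  rw [h3]
  linear_combination (-1 : ℚ) ^ i * (q : ℚ) ^ (((m : ℤ) + 1) - k - 1) * (q : ℚ) ^ (-(i : ℤ)) * h2
end

section
/- Let F_q be a finite field of odd order, n ≥ 2 even, a_1,...,a_n ∈ F_q^*, b_1,...,b_n ∈ F_q not all zero, a_0, b_0 ∈ F_q. Set a = a_1···a_n, b = Σ b_i^2 a_i^{-1}, c = b_0^2 - a_0 b. If b ≠ 0 and c ≠ 0, then the number of common solutions in F_q^n of the system a_1 x_1^2 + ... + a_n x_n^2 = a_0, b_1 x_1 + ... + b_n x_n = b_0 equals q^{n-2} + q^{(n-2)/2} * χ((-1)^{n/2} a c), where χ is the quadratic character of F_q. -/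
open scoped Classical in
/-- The quadratic character of a finite field. -/
noncomputable def quadChar (F : Type*) [Field F] (x : F) : ℤ :=
  if x = 0 then 0 else if IsSquare x then 1 else -1

theorem aux_map_sum {F ι : Type*} [Field F] (ψ : AddChar F ℂ) (s : Finset ι) (f : ι → F) :
    ψ (∑ i ∈ s, f i) = ∏ i ∈ s, ψ (f i) := by
  classical
  induction s using Finset.induction_on with
  | empty => simp
  | insert i s hi ih => rw [Finset.sum_insert hi, Finset.prod_insert hi, AddChar.map_add_eq_mul, ih]

open Finset in
theorem aux_lin {F : Type*} [Field F] [Fintype F] (χ : MulChar F ℂ) (hχ : χ.IsQuadratic)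
    (ψ : AddChar F ℂ) (A : F) (hA : A ≠ 0) :
    ∑ x, χ x * ψ (A * x) = χ A * gaussSum χ ψ := by
  have h := gaussSum_mulShift_eq χ ψ (Units.mk0 A hA)
  rw [hχ.inv] at h
  simpa [gaussSum, AddChar.mulShift_apply] using h

open Finset in
theorem aux_sq {F : Type*} [Field F] [Fintype F] [DecidableEq F] (hF : ringChar F ≠ 2)
    (ψ : AddChar F ℂ) (hψ : ψ.IsPrimitive) (A : F) (hA : A ≠ 0) :
    ∑ x, ψ (A * x ^ 2) = (quadraticChar F).ringHomComp (Int.castRingHom ℂ) A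
      * gaussSum ((quadraticChar F).ringHomComp (Int.castRingHom ℂ)) ψ := by
  rw [← aux_lin _ ((quadraticChar_isQuadratic F).comp _) ψ A hA]
  have h1 : ∑ x, ψ (A * x ^ 2)
      = ∑ y, ∑ x with x ^ 2 = y, ψ (A * x ^ 2) := (Finset.sum_fiberwise _ _ _).symm
  have h2 : ∀ y : F, ∑ x with x ^ 2 = y, ψ (A * x ^ 2)
      = (quadraticChar F).ringHomComp (Int.castRingHom ℂ) y * ψ (A * y) + ψ (y * A) := by
    intro y
    have h3 : ∑ x with x ^ 2 = y, ψ (A * x ^ 2) = ∑ x : F with x ^ 2 = y, ψ (A * y) := by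
      apply Finset.sum_congr rfl
      intro x hx
      rw [(Finset.mem_filter.mp hx).2]
    have h4 := quadraticChar_card_sqrts hF y
    have h5 : ((#{x : F | x ^ 2 = y} : ℕ) : ℤ) = quadraticChar F y + 1 := by
      rw [← h4]; congr 2; ext; simp
    have h6 : ((#{x : F | x ^ 2 = y} : ℕ) : ℂ) = (quadraticChar F y : ℂ) + 1 := by
      exact_mod_cast h5
    rw [h3, Finset.sum_const, nsmul_eq_mul, h6, MulChar.ringHomComp_apply, mul_comm y A]
    simp only [eq_intCast]
    ring
  rw [h1, Finset.sum_congr rfl (fun y _ => h2 y), Finset.sum_add_distrib,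
    AddChar.sum_mulShift A hψ, if_neg hA]
  simp

theorem aux_quad {F : Type*} [Field F] [Fintype F] [DecidableEq F] (hF : ringChar F ≠ 2)
    (ψ : AddChar F ℂ) (hψ : ψ.IsPrimitive) (A B : F) (hA : A ≠ 0) :
    ∑ x, ψ (A * x ^ 2 + B * x) = (quadraticChar F).ringHomComp (Int.castRingHom ℂ) A
      * gaussSum ((quadraticChar F).ringHomComp (Int.castRingHom ℂ)) ψ
      * ψ (- (B ^ 2 * (4 * A)⁻¹)) := by
  have h2 : (2 : F) ≠ 0 := Ring.two_ne_zero hF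
  rw [← aux_sq hF ψ hψ A hA, Finset.sum_mul,
    ← Equiv.sum_comp (Equiv.addRight (B * (2 * A)⁻¹)) (fun x => ψ (A * x ^ 2) * _)]
  apply Finset.sum_congr rfl
  intro x _
  rw [← AddChar.map_add_eq_mul]
  congr 1
  have h4 : (4 : F) = 2 * 2 := by norm_num
  simp only [Equiv.coe_addRight, h4]
  field_simp
  ring

theorem aux_inner {F : Type*} [Field F] [Fintype F] (ψ : AddChar F ℂ) {n : ℕ}
    (a b : Fin n → F) (a0 b0 s t : F) :
    ∑ x : Fin n → F, ψ (s * (∑ i, a i * (x i) ^ 2 - a0) + t * (∑ i, b i * x i - b0))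
      = ψ (-(s * a0) - t * b0) * ∏ i, ∑ y, ψ (s * a i * y ^ 2 + t * b i * y) := by
  classical
  rw [Finset.prod_univ_sum, Fintype.piFinset_univ, Finset.mul_sum]
  apply Finset.sum_congr rfl
  intro x _
  rw [← aux_map_sum, ← AddChar.map_add_eq_mul]
  congr 1
  rw [Finset.sum_add_distrib, mul_sub, mul_sub, Finset.mul_sum, Finset.mul_sum]
  simp only [mul_assoc]
  ring

theorem aux_count {F : Type*} [Field F] [Fintype F] [DecidableEq F] (ψ : AddChar F ℂ)
    (hψ : ψ.IsPrimitive) {X : Type*} [Fintype X] (f g : X → F) (u v : F) :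
    ∑ s, ∑ t, ∑ x, ψ (s * (f x - u) + t * (g x - v))
      = (Nat.card {x // f x = u ∧ g x = v} : ℂ) * (Fintype.card F : ℂ) ^ 2 := by
  have h : ∀ x, ∑ s, ∑ t, ψ (s * (f x - u) + t * (g x - v))
      = if f x = u ∧ g x = v then (Fintype.card F : ℂ) ^ 2 else 0 := by
    intro x
    simp_rw [AddChar.map_add_eq_mul, ← Finset.mul_sum, ← Finset.sum_mul]
    rw [AddChar.sum_mulShift _ hψ, AddChar.sum_mulShift _ hψ]
    simp only [sub_eq_zero]
    by_cases h1 : f x = u <;> by_cases h2 : g x = v <;> simp [h1, h2, sq]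
  have h' : ∑ s, ∑ t, ∑ x, ψ (s * (f x - u) + t * (g x - v))
      = ∑ x, ∑ s, ∑ t, ψ (s * (f x - u) + t * (g x - v)) := by
    rw [Finset.sum_comm]
    rw [Finset.sum_congr rfl (fun t _ => Finset.sum_comm)]
    rw [Finset.sum_comm]
    exact Finset.sum_congr rfl (fun x _ => Finset.sum_comm)
  rw [h', Finset.sum_congr rfl (fun x _ => h x), ← Finset.sum_filter, Finset.sum_const,
    nsmul_eq_mul, Nat.card_eq_fintype_card, Fintype.card_subtype]

theorem aux_s {F : Type*} [Field F] [Fintype F] [DecidableEq F] (hF : ringChar F ≠ 2)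
    (ψ : AddChar F ℂ) (hψ : ψ.IsPrimitive) (χ : MulChar F ℂ)
    (hχ : χ = (quadraticChar F).ringHomComp (Int.castRingHom ℂ))
    (hsq : ∀ x, x ≠ 0 → χ x * χ x = 1)
    {m : ℕ} (a b : Fin (2 * m + 2) → F)
    (ha : ∀ i, a i ≠ 0) (a0 b0 s B : F) (hs : s ≠ 0)
    (hBd : B = ∑ i, (b i) ^ 2 * (a i)⁻¹) (hB : B ≠ 0) :
    ∑ t, ψ (-(s * a0) - t * b0) * ∏ i, ∑ y, ψ (s * a i * y ^ 2 + t * b i * y)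
      = χ (∏ i, a i) * χ (-B) * gaussSum χ ψ ^ (2 * m + 3)
        * (χ s * ψ ((b0 ^ 2 - a0 * B) * B⁻¹ * s)) := by
  have h2 : (2 : F) ≠ 0 := Ring.two_ne_zero hF
  have h4 : (4 : F) = 2 * 2 := by norm_num
  have hin : ∀ t, ψ (-(s * a0) - t * b0) * ∏ i, ∑ y, ψ (s * a i * y ^ 2 + t * b i * y)
      = χ (∏ i, a i) * gaussSum χ ψ ^ (2 * m + 2) * ψ (-(s * a0)) *
        ψ (-(B * (4 * s)⁻¹) * t ^ 2 + (-b0) * t) := by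
    intro t
    have h5 : ∀ i, ∑ y, ψ (s * a i * y ^ 2 + t * b i * y)
        = χ s * χ (a i) * gaussSum χ ψ
          * ψ (-(t ^ 2 * (4 * s)⁻¹) * (b i ^ 2 * (a i)⁻¹)) := by
      intro i
      rw [aux_quad hF ψ hψ _ _ (mul_ne_zero hs (ha i)), ← hχ, map_mul]
      congr 2
      have := ha i
      rw [h4]
      field_simp
    rw [Finset.prod_congr rfl (fun i _ => h5 i)]
    simp only [Finset.prod_mul_distrib, Finset.prod_const, Finset.card_univ, Fintype.card_fin]
    rw [← aux_map_sum, ← Finset.mul_sum, ← hBd, ← map_prod]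
    have h6 : χ s ^ (2 * m + 2) = 1 := by
      rw [show 2 * m + 2 = 2 * (m + 1) by ring, pow_mul, sq, hsq s hs, one_pow]
    have h7 : ψ (-(s * a0) - t * b0) * ψ (-(t ^ 2 * (4 * s)⁻¹) * B)
        = ψ (-(s * a0)) * ψ (-(B * (4 * s)⁻¹) * t ^ 2 + (-b0) * t) := by
      rw [← AddChar.map_add_eq_mul, ← AddChar.map_add_eq_mul]
      congr 1
      ring
    rw [h6]
    linear_combination χ (∏ i, a i) * gaussSum χ ψ ^ (2 * m + 2) * h7
  have hne : -(B * (4 * s)⁻¹) ≠ 0 := by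
    rw [h4]
    exact neg_ne_zero.mpr (mul_ne_zero hB (inv_ne_zero (mul_ne_zero (mul_ne_zero h2 h2) hs)))
  rw [Finset.sum_congr rfl (fun t _ => hin t), ← Finset.mul_sum,
    aux_quad hF ψ hψ _ _ hne, ← hχ]
  have h8 : χ (-(B * (4 * s)⁻¹)) = χ (-B) * χ s := by
    have : -(B * (4 * s)⁻¹) = -B * s * ((2 * s)⁻¹ * (2 * s)⁻¹) := by
      rw [h4]; field_simp
    rw [this, map_mul, map_mul, map_mul, hsq _ (inv_ne_zero (mul_ne_zero h2 hs)), mul_one]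
  have h9 : ψ (-(s * a0)) * ψ (-((-b0) ^ 2 * (4 * -(B * (4 * s)⁻¹))⁻¹))
      = ψ ((b0 ^ 2 - a0 * B) * B⁻¹ * s) := by
    rw [← AddChar.map_add_eq_mul]
    congr 1
    rw [h4]
    field_simp
    ring
  rw [h8, ← h9]
  ring

theorem stmt_9 (F : Type*) [Field F] [Fintype F] (hq : Odd (Fintype.card F))
    (n : ℕ) (hn : 2 ≤ n) (hne : Even n)
    (a b : Fin n → F) (ha : ∀ i, a i ≠ 0) (hb : ∃ i, b i ≠ 0) (a0 b0 : F)
    (hB : (∑ i, (b i) ^ 2 * (a i)⁻¹) ≠ 0)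
    (hc : b0 ^ 2 - a0 * (∑ i, (b i) ^ 2 * (a i)⁻¹) ≠ 0) :
    (Nat.card {x : Fin n → F //
        (∑ i, a i * (x i) ^ 2) = a0 ∧ (∑ i, b i * x i) = b0} : ℤ)
      = (Fintype.card F : ℤ) ^ (n - 2)
        + (Fintype.card F : ℤ) ^ ((n - 2) / 2)
          * quadChar F ((-1 : F) ^ (n / 2) * (∏ i, a i)
              * (b0 ^ 2 - a0 * (∑ i, (b i) ^ 2 * (a i)⁻¹))) := by
  classical
  obtain ⟨m, rfl⟩ : ∃ m, n = 2 * m + 2 := by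
    obtain ⟨k, hk⟩ := hne
    exact ⟨k - 1, by omega⟩
  have hF : ringChar F ≠ 2 := by
    intro h
    have := FiniteField.even_card_of_char_two h
    rw [Nat.odd_iff] at hq
    omega
  have hquad : ∀ x, quadChar F x = quadraticChar F x := by
    intro x
    rw [quadraticChar_apply]
    unfold quadChar quadraticCharFun
    congr
  rw [hquad]
  obtain ⟨ψ, hψ⟩ : ∃ ψ : AddChar F ℂ, ψ.IsPrimitive :=
    ⟨_, AddChar.FiniteField.primitiveChar_to_Complex_isPrimitive F⟩
  obtain ⟨χ, hχ⟩ : ∃ χ, χ = (quadraticChar F).ringHomComp (Int.castRingHom ℂ) := ⟨_, rfl⟩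
  have hχq : χ.IsQuadratic := hχ ▸ (quadraticChar_isQuadratic F).comp _
  have hχ1 : χ ≠ 1 := by
    rw [hχ]
    exact (MulChar.ringHomComp_ne_one_iff (RingHom.injective_int _)).mpr (quadraticChar_ne_one hF)
  have hsq : ∀ x, x ≠ 0 → χ x * χ x = 1 := by
    intro x hx
    rcases hχq x with h | h | h
    · exact absurd h ((IsUnit.mk0 x hx).map χ).ne_zero
    · rw [h]; norm_num
    · rw [h]; norm_num
  have hG := gaussSum_sq hχ1 hχq hψ
  have hcount := aux_count ψ hψ (fun x : Fin (2 * m + 2) → F => ∑ i, a i * (x i) ^ 2)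
    (fun x => ∑ i, b i * x i) a0 b0
  simp only [aux_inner] at hcount
  obtain ⟨B, hBd⟩ : ∃ B, B = ∑ i, (b i) ^ 2 * (a i)⁻¹ := ⟨_, rfl⟩
  rw [← hBd] at hB hc ⊢
  rw [← Finset.add_sum_erase _ _ (Finset.mem_univ (0 : F))] at hcount
  have hz : ∑ t, ψ (-(0 * a0) - t * b0) * ∏ i, ∑ y, ψ (0 * a i * y ^ 2 + t * b i * y)
      = (Fintype.card F : ℂ) ^ (2 * m + 2) := by
    rw [Finset.sum_eq_single 0]
    · simp
    · intro t _ ht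
      obtain ⟨i, hi⟩ := hb
      rw [Finset.prod_eq_zero (Finset.mem_univ i), mul_zero]
      have := AddChar.sum_mulShift (t * b i) hψ
      rw [if_neg (mul_ne_zero ht hi)] at this
      simpa [mul_comm] using this
    · simp
  have hnz : ∑ s ∈ Finset.univ.erase (0 : F),
      ∑ t, ψ (-(s * a0) - t * b0) * ∏ i, ∑ y, ψ (s * a i * y ^ 2 + t * b i * y)
      = χ (∏ i, a i) * χ (-B) * gaussSum χ ψ ^ (2 * m + 3)
        * (χ ((b0 ^ 2 - a0 * B) * B⁻¹) * gaussSum χ ψ) := by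
    rw [← aux_lin χ hχq ψ _ (mul_ne_zero hc (inv_ne_zero hB)),
      ← Finset.add_sum_erase _ _ (Finset.mem_univ (0 : F)), MulChar.map_zero, zero_mul, zero_add,
      Finset.mul_sum]
    apply Finset.sum_congr rfl
    intro s hs
    exact aux_s hF ψ hψ χ hχ hsq a b ha a0 b0 s B (Finset.ne_of_mem_erase hs) hBd hB
  rw [hz, hnz] at hcount
  have hq0 : (Fintype.card F : ℂ) ≠ 0 := by simp
  have e1 : χ (-B) * χ ((b0 ^ 2 - a0 * B) * B⁻¹) = χ (-1) * χ (b0 ^ 2 - a0 * B) := by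
    rw [← map_mul, ← map_mul]
    congr 1
    field_simp
  have e2 : gaussSum χ ψ ^ (2 * m + 4) = χ (-1) * χ (-1) ^ (m + 1)
      * (Fintype.card F : ℂ) ^ (m + 2) := by
    rw [show 2 * m + 4 = 2 * (m + 2) by ring, pow_mul, hG]
    ring
  have e3 : χ (-1) * χ (-1) = 1 := hsq _ (by simp)
  have key : (Nat.card {x : Fin (2 * m + 2) → F //
        (∑ i, a i * (x i) ^ 2) = a0 ∧ (∑ i, b i * x i) = b0} : ℂ)
      = (Fintype.card F : ℂ) ^ (2 * m) + (Fintype.card F : ℂ) ^ m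
          * χ ((-1 : F) ^ (m + 1) * (∏ i, a i) * (b0 ^ 2 - a0 * B)) := by
    apply mul_right_cancel₀ (pow_ne_zero 2 hq0)
    rw [map_mul χ (_ * _) _, map_mul χ (_ ^ _) _, map_pow, ← hcount]
    linear_combination (χ (∏ i, a i) * gaussSum χ ψ ^ (2 * m + 4)) * e1
      + χ (∏ i, a i) * χ (-1) * χ (b0 ^ 2 - a0 * B) * e2
      + χ (∏ i, a i) * χ (b0 ^ 2 - a0 * B) * χ (-1) ^ (m + 1)
        * (Fintype.card F : ℂ) ^ (m + 2) * e3
  rw [show 2 * m + 2 - 2 = 2 * m by omega, show 2 * m / 2 = m by omega,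
    show (2 * m + 2) / 2 = m + 1 by omega]
  rw [hχ, MulChar.ringHomComp_apply, eq_intCast] at key
  exact_mod_cast key
end

section
/- Let p be an odd prime, q = p^{2e}, and let n satisfy 1 ≤ n ≤ q and p ∤ n. The number of n-element subsets {x_1,...,x_n} of F_q satisfying x_1 + ... + x_n = 0 and x_1^2 + ... + x_n^2 = 0 equals (1/q^2) C(q,n) + ((q-1)/(2 q^{3/2})) (α(n) - (-1)^n β(n)), where α(n) = Σ_{i+pj=n, 0≤i≤√q} C(√q, i) C((q-√q)/p, j) and β(n) = Σ_{i+pj=n, i≥0} (-1)^j C(√q-1+i, √q-1) C((q+√q)/p, j). -/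
open PowerSeries in
lemma aux_coeff (g : ℂ⟦X⟧) (p N n : ℕ) (hp : 0 < p) :
    coeff n (g * (1 + X ^ p) ^ N) =
      ∑ ij ∈ (Finset.range (n + 1) ×ˢ Finset.range (n + 1)).filter
        (fun ij => ij.1 + p * ij.2 = n), coeff ij.1 g * (N.choose ij.2 : ℂ) := by
  have h1 : ((1 : ℂ⟦X⟧) + X ^ p) ^ N = ∑ j ∈ Finset.range (N + 1), X ^ (p * j) * C (N.choose j : ℂ) := by
    rw [add_comm, add_pow]
    refine Finset.sum_congr rfl fun j _ => ?_
    simp [pow_mul]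
  rw [h1, Finset.mul_sum, map_sum, Finset.sum_filter, Finset.sum_product_right]
  have h2 : ∀ j, coeff n (g * (X ^ (p * j) * C (N.choose j : ℂ))) =
      ∑ i ∈ Finset.range (n + 1), if i + p * j = n then coeff i g * (N.choose j : ℂ) else 0 := by
    intro j
    rw [← mul_assoc, coeff_mul_C, coeff_mul_X_pow']
    split_ifs with h
    · rw [Finset.sum_eq_single (n - p * j)]
      · rw [if_pos (by omega)]
      · intro b _ hb
        rw [if_neg (by omega)]
      · intro hb
        simp at hb
    · rw [zero_mul, Finset.sum_eq_zero]
      intro b _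
      rw [if_neg (by omega)]
  rw [Finset.sum_congr rfl fun j _ => h2 j]
  have big : ∀ j, n < j → (∑ i ∈ Finset.range (n + 1), if i + p * j = n then coeff i g * (N.choose j : ℂ) else 0) = 0 := by
    intro j hj
    apply Finset.sum_eq_zero
    intro b _
    rw [if_neg]
    nlinarith
  have big2 : ∀ j, N < j → (∑ i ∈ Finset.range (n + 1), if i + p * j = n then coeff i g * (N.choose j : ℂ) else 0) = 0 := by
    intro j hj
    apply Finset.sum_eq_zero
    intro b _
    simp [Nat.choose_eq_zero_of_lt hj]
  rcases le_total n N with h | h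
  · symm
    apply Finset.sum_subset (by intro x; simp; omega)
    intro j _ hj
    apply big
    simp at hj; omega
  · apply Finset.sum_subset (by intro x; simp; omega)
    intro j _ hj
    apply big2
    simp at hj; omega

open PowerSeries in
lemma aux_inv_s17 (s : ℕ) (hs : 0 < s) :
    ((1 : ℂ⟦X⟧) + X) ^ s * (mk fun i => (-1 : ℂ) ^ i * ((s - 1 + i).choose (s - 1) : ℂ)) = 1 := by
  obtain ⟨d, rfl⟩ : ∃ d, s = d + 1 := ⟨s - 1, by omega⟩
  have h := congrArg (rescale (-1 : ℂ)) (mk_add_choose_mul_one_sub_pow_eq_one ℂ d)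
  rw [map_mul, map_pow, map_sub, map_one, rescale_X, mul_comm] at h
  convert h using 2
  · simp
  · ext i; simp [coeff_rescale]

open PowerSeries in
lemma aux_esymm {ι : Type*} [Fintype ι] (f : ι → ℂ) (n : ℕ) :
    coeff n (∏ x, ((1 : ℂ⟦X⟧) + C (f x) * X)) =
      ∑ S ∈ Finset.powersetCard n (Finset.univ : Finset ι), ∏ x ∈ S, f x := by
  classical
  rw [Finset.prod_one_add, map_sum, ← Finset.powerset_univ.symm, Finset.powersetCard_eq_filter, Finset.sum_filter]
  refine Finset.sum_congr (by simp) fun S _ => ?_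
  rw [Finset.prod_mul_distrib, Finset.prod_const, ← map_prod, coeff_C_mul, coeff_X_pow]
  by_cases h : S.card = n
  · simp [h]
  · simp [h, Ne.symm h]

open PowerSeries in
lemma aux_roots (p : ℕ) (hodd : Odd p) (ζ : ℂ) (hζ : IsPrimitiveRoot ζ p) :
    ∏ j ∈ Finset.range p, ((1 : ℂ⟦X⟧) + C (ζ ^ j) * X) = 1 + X ^ p := by
  classical
  have h : IsPrimitiveRoot (C ζ : ℂ⟦X⟧) p := hζ.map_of_injective C_injective
  have := h.pow_add_pow_eq_prod_add_mul 1 X hodd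
  rw [one_pow] at this
  rw [this, Finset.prod, Finset.prod, Polynomial.nthRootsFinset_def, Multiset.toFinset_val]
  rw [Multiset.dedup_eq_self.2 h.nthRoots_one_nodup]
  have h2 := h.nthRoots_eq (one_pow p)
  rw [h2]
  simp [Multiset.map_map]

lemma aux_fourier (p : ℕ) (hp : p.Prime) (ζ : ℂ) (hζ : IsPrimitiveRoot ζ p) (f : ℕ → ℚ) (H : ℚ)
    (h : ∑ j ∈ Finset.range p, (f j : ℂ) * ζ ^ j = H) :
    ∃ c, f 0 = c + H ∧ ∀ j, 0 < j → j < p → f j = c := by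
  set P : Polynomial ℚ := ∑ j ∈ Finset.range p, Polynomial.monomial j (f j) - Polynomial.C H with hP
  have hev : Polynomial.aeval ζ P = 0 := by
    simp [hP, Polynomial.aeval_monomial, h]
  have hdvd : Polynomial.cyclotomic p ℚ ∣ P := by
    rw [Polynomial.cyclotomic_eq_minpoly_rat hζ hp.pos]
    exact minpoly.dvd _ _ hev
  have : Fact p.Prime := ⟨hp⟩
  obtain ⟨Q, hQ⟩ := hdvd
  have hdeg : P.natDegree ≤ p - 1 := by
    apply (Polynomial.natDegree_sub_C).le.trans
    apply Polynomial.natDegree_sum_le_of_forall_le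
    intro i hi
    have := Finset.mem_range.1 hi
    exact (Polynomial.natDegree_monomial_le _).trans (by omega)
  have hQ0 : Q.natDegree = 0 := by
    by_cases hQz : Q = 0
    · simp [hQz]
    rw [hQ, Polynomial.natDegree_mul (Polynomial.cyclotomic_ne_zero _ _) hQz, Polynomial.natDegree_cyclotomic, Nat.totient_prime hp] at hdeg
    omega
  obtain ⟨c, rfl⟩ := Polynomial.natDegree_eq_zero.1 hQ0
  have hco : ∀ j, j < p → f j - (if j = 0 then H else 0) = c := by
    intro j hj
    have := congrArg (fun P => Polynomial.coeff P j) hQ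
    simp only [hP, Polynomial.coeff_sub, Polynomial.finsetSum_coeff, Polynomial.coeff_monomial, Polynomial.coeff_mul_C, Polynomial.coeff_C, Polynomial.cyclotomic_prime, Polynomial.coeff_X_pow] at this
    simpa [hj] using this
  refine ⟨c, ?_, ?_⟩
  · have := hco 0 hp.pos
    simp at this; linarith
  · intro j h0 hj
    have := hco j hj
    rw [if_neg (by omega)] at this
    linarith

open PowerSeries in
lemma aux_key {ι : Type*} [Fintype ι] (p : ℕ) (hp : p.Prime) (hodd : Odd p) (v : ι → ℂ)
    (hv : ∀ x, v x ^ p = 1) (s₁ s₂ : ℕ) (h : ∑ x, v x = (s₁ : ℂ) - s₂) :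
    ∃ N : ℕ, (1 + X) ^ s₂ * ∏ x, ((1 : ℂ⟦X⟧) + C (v x) * X) = (1 + X) ^ s₁ * (1 + X ^ p) ^ N ∧
      p * N + s₁ = Fintype.card ι + s₂ := by
  classical
  have : NeZero p := ⟨hp.ne_zero⟩
  have hζ := Complex.isPrimitiveRoot_exp p hp.ne_zero
  set ζ := Complex.exp (2 * Real.pi * Complex.I / p)
  have hk : ∀ x, ∃ j, j < p ∧ ζ ^ j = v x := fun x => hζ.eq_pow_of_pow_eq_one (hv x)
  choose k hk1 hk2 using hk
  set f : ℕ → ℕ := fun j => (Finset.univ.filter fun x => k x = j).card with hf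
  have hmaps : ∀ x ∈ (Finset.univ : Finset ι), k x ∈ Finset.range p := fun x _ => by simpa using hk1 x
  have hsum : ∑ j ∈ Finset.range p, (((f j : ℚ)) : ℂ) * ζ ^ j = (((s₁ : ℚ) - s₂ : ℚ) : ℂ) := by
    push_cast
    rw [← h, ← Finset.sum_fiberwise_of_maps_to hmaps]
    refine Finset.sum_congr rfl fun j _ => ?_
    rw [Finset.sum_congr rfl (g := fun _ => ζ ^ j)]
    · simp [hf]
    · intro x hx
      rw [← hk2 x, (Finset.mem_filter.1 hx).2]
  obtain ⟨c, hc0, hc⟩ := aux_fourier p hp ζ hζ (fun j => (f j : ℚ)) _ hsum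
  have h1p : 1 < p := hp.one_lt
  have hcN : ∀ j, 0 < j → j < p → f j = f 1 := by
    intro j h1 h2
    have e1 := hc j h1 h2
    have e2 := hc 1 one_pos h1p
    exact_mod_cast e1.trans e2.symm
  have h0 : f 0 + s₂ = f 1 + s₁ := by
    have e2 := hc 1 one_pos h1p
    have : (f 0 : ℚ) + s₂ = f 1 + s₁ := by linarith
    exact_mod_cast this
  refine ⟨f 1, ?_, ?_⟩
  · have hprod : ∏ x, ((1 : ℂ⟦X⟧) + C (v x) * X) =
        ∏ j ∈ Finset.range p, ((1 : ℂ⟦X⟧) + C (ζ ^ j) * X) ^ f j := by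
      rw [← Finset.prod_fiberwise_of_maps_to hmaps]
      refine Finset.prod_congr rfl fun j _ => ?_
      rw [Finset.prod_congr rfl (g := fun _ => ((1 : ℂ⟦X⟧) + C (ζ ^ j) * X))]
      · simp [hf]
      · intro x hx
        rw [← hk2 x, (Finset.mem_filter.1 hx).2]
    rw [hprod, ← aux_roots p hodd ζ hζ, ← Finset.prod_pow]
    obtain ⟨m, rfl⟩ : ∃ m, p = m + 1 := ⟨p - 1, by omega⟩
    rw [Finset.prod_range_succ', Finset.prod_range_succ']
    have : ∀ j ∈ Finset.range m, ((1 : ℂ⟦X⟧) + C (ζ ^ (j+1)) * X) ^ f (j+1) = ((1 : ℂ⟦X⟧) + C (ζ ^ (j+1)) * X) ^ f 1 := by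
      intro j hj
      rw [hcN (j+1) (by omega) (by simpa using hj)]
    rw [Finset.prod_congr rfl this]
    simp only [pow_zero, map_one, one_mul]
    rw [mul_left_comm, mul_left_comm (_ ^ s₁), ← pow_add, ← pow_add, add_comm s₂, h0, add_comm s₁]
  · have hcard : Fintype.card ι = ∑ j ∈ Finset.range p, f j := 
      Finset.card_eq_sum_card_fiberwise hmaps
    obtain ⟨m, rfl⟩ : ∃ m, p = m + 1 := ⟨p - 1, by omega⟩
    rw [hcard, Finset.sum_range_succ', Finset.sum_congr rfl (g := fun _ => f 1)]
    · simp; linarith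
    · intro j hj
      rw [hcN (j+1) (by omega) (by simpa using hj)]

lemma aux_quadsum {F : Type*} [Field F] [Fintype F] [DecidableEq F] (hF : ringChar F ≠ 2)
    (ψ : AddChar F ℂ) (hψ : ψ.IsPrimitive) (a : F) (ha : a ≠ 0) :
    ∑ x, ψ (a * x ^ 2) = (quadraticChar F a : ℂ) *
      gaussSum ((quadraticChar F).ringHomComp (Int.castRingHom ℂ)) ψ := by
  have h1 : ∑ x, ψ (a * x ^ 2) = ∑ y, ((quadraticChar F y : ℂ) + 1) * ψ (a * y) := by
    rw [← Finset.sum_fiberwise (s := Finset.univ) (g := fun x : F => x ^ 2)]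
    refine Finset.sum_congr rfl fun y _ => ?_
    rw [Finset.sum_congr rfl (g := fun _ => ψ (a * y))]
    · rw [Finset.sum_const, nsmul_eq_mul]
      congr 1
      have := quadraticChar_card_sqrts hF y
      have h2 : (Finset.univ.filter fun x : F => x ^ 2 = y) = {x : F | x ^ 2 = y}.toFinset := by
        ext; simp
      rw [h2]
      exact_mod_cast congrArg (fun z : ℤ => (z : ℂ)) this
    · intro x hx
      rw [(Finset.mem_filter.1 hx).2]
  have h3 : ∑ y, ψ (a * y) = 0 := by
    have := AddChar.sum_mulShift a hψ
    rw [if_neg ha] at this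
    simpa [mul_comm] using this
  rw [h1]
  simp only [add_mul, one_mul]
  rw [Finset.sum_add_distrib, h3, add_zero, gaussSum, Finset.mul_sum]
  symm
  rw [← Equiv.sum_comp (Equiv.mulLeft₀ a ha)]
  refine Finset.sum_congr rfl fun y _ => ?_
  have h4 : (quadraticChar F a : ℂ) * (quadraticChar F a : ℂ) = 1 := by
    have := quadraticChar_sq_one ha
    rw [pow_two] at this
    exact_mod_cast this
  have h5 : (Equiv.mulLeft₀ a ha) y = a * y := rfl
  simp only [h5, MulChar.ringHomComp_apply, map_mul, eq_intCast, Int.cast_mul]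
  linear_combination (quadraticChar F y : ℂ) * ψ (a * y) * h4

lemma aux_square {F : Type*} [Field F] [Fintype F] [DecidableEq F] (hF : ringChar F ≠ 2) (s : ℕ)
    (hs : Odd s) (hc : Fintype.card F = s ^ 2) (z : F) (hz : z ≠ 0) (h : z ^ s = z) :
    quadraticChar F z = 1 := by
  obtain ⟨m, rfl⟩ := hs
  rw [quadraticChar_eq_pow_of_char_ne_two hF hz, if_pos]
  have h1 : z ^ (2 * m) = 1 := by
    rw [pow_succ] at h
    exact mul_right_cancel₀ hz (by rw [h, one_mul])
  have h2 : Fintype.card F / 2 = 2 * m * (m + 1) := by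
    rw [hc, show (2 * m + 1) ^ 2 = 1 + 2 * (2 * m * (m + 1)) by ring]
    omega
  rw [h2, pow_mul, h1, one_pow]

lemma aux_E_shift {F : Type*} [Field F] [Fintype F] (f g : F → ℂ) (y : F) (c : ℂ) (n : ℕ)
    (h : ∀ x, f (x + y) = c * g x) :
    ∑ S ∈ Finset.powersetCard n (Finset.univ : Finset F), ∏ x ∈ S, f x =
    c ^ n * ∑ S ∈ Finset.powersetCard n (Finset.univ : Finset F), ∏ x ∈ S, g x := by
  rw [Finset.mul_sum]
  have hm : Finset.powersetCard n (Finset.univ : Finset F) =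
    (Finset.powersetCard n (Finset.univ : Finset F)).map
      (Finset.mapEmbedding (Equiv.addRight y).toEmbedding).toEmbedding := by
    rw [← Finset.powersetCard_map]
    simp
  conv_lhs => rw [hm]
  rw [Finset.sum_map]
  refine Finset.sum_congr rfl fun S hS => ?_
  rw [← (Finset.mem_powersetCard.1 hS).2, ← Finset.prod_const, ← Finset.prod_mul_distrib]
  simp [h]

lemma aux_main {F : Type*} [Field F] [Fintype F] [DecidableEq F] (p s n : ℕ) (hp : p.Prime)
    (hodd : Odd p) (hchar : CharP F p) (hsodd : Odd s) (hs0 : 0 < s)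
    (hcard : Fintype.card F = s ^ 2) (hfrob : ∀ m : ℕ, (m : F) ^ s = m) (hpn : ¬ p ∣ n)
    (α β : ℂ)
    (hα : ∀ N, p * N + s = s ^ 2 →
      PowerSeries.coeff n ((1 + PowerSeries.X : PowerSeries ℂ) ^ s * (1 + PowerSeries.X ^ p) ^ N) = α)
    (hβ : ∀ N, p * N = s ^ 2 + s → 
      PowerSeries.coeff n ((PowerSeries.mk fun i => (-1 : ℂ) ^ i * ((s - 1 + i).choose (s - 1) : ℂ)) * (1 + PowerSeries.X ^ p) ^ N) = β) :
    (s : ℂ) ^ 4 * ((Finset.univ : Finset (Finset F)).filter fun S =>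
      S.card = n ∧ (∑ x ∈ S, x) = 0 ∧ (∑ x ∈ S, x ^ 2) = 0).card
     = (s ^ 2).choose n + ((s : ℂ) ^ 2 - 1) * s * (α - β) / 2 := by
  have hF : ringChar F ≠ 2 := by
    rw [ringChar.eq F p]
    rintro rfl
    exact absurd hodd (by decide)
  have hn0 : (n : F) ≠ 0 := by rwa [Ne, CharP.cast_eq_zero_iff F p]
  have h20 : (2 : F) ≠ 0 := Ring.two_ne_zero hF
  obtain ⟨ψ, hψ⟩ : ∃ ψ : AddChar F ℂ, ψ.IsPrimitive := by
    obtain ⟨x, hx⟩ := (AddChar.exists_apply_ne_zero (α := F) (a := 1)).2 one_ne_zero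
    exact ⟨x, AddChar.IsPrimitive.of_ne_one (by rintro rfl; simp at hx)⟩
  have hψp : ∀ x, ψ x ^ p = 1 := by
    intro x
    rw [← AddChar.map_nsmul_eq_pow]
    simp [CharP.cast_eq_zero]
  set χ : MulChar F ℂ := (quadraticChar F).ringHomComp (Int.castRingHom ℂ) with hχ
  set G := gaussSum χ ψ with hG
  have hG2 : G ^ 2 = (s : ℂ) ^ 2 := by
    rw [hG, gaussSum_sq _ _ hψ, hcard]
    · have : quadraticChar F (-1) = 1 := by
        apply aux_square hF s hsodd hcard
        · simp
        · exact hsodd.neg_one_pow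
      simp [hχ, MulChar.ringHomComp_apply, this]
    · rw [hχ, MulChar.ringHomComp_ne_one_iff]
      · exact quadraticChar_ne_one hF
      · exact (algebraMap ℤ ℂ).injective_int
    · exact (quadraticChar_isQuadratic F).comp _
  -- E
  set E : (F → ℂ) → ℂ := fun f =>
    ∑ S ∈ Finset.powersetCard n (Finset.univ : Finset F), ∏ x ∈ S, f x with hE
  have hcount : (s : ℂ) ^ 4 * ((Finset.univ : Finset (Finset F)).filter fun S =>
      S.card = n ∧ (∑ x ∈ S, x) = 0 ∧ (∑ x ∈ S, x ^ 2) = 0).card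
      = ∑ a, ∑ b, E (fun x => ψ (a * x ^ 2 + b * x)) := by
    have e1 : ∀ S : Finset F, ∑ a, ∑ b, ∏ x ∈ S, ψ (a * x ^ 2 + b * x) =
        if ((∑ x ∈ S, x) = 0 ∧ (∑ x ∈ S, x ^ 2) = 0) then (s : ℂ) ^ 4 else 0 := by
      intro S
      have e2 : ∀ a b, ∏ x ∈ S, ψ (a * x ^ 2 + b * x) = ψ (a * ∑ x ∈ S, x ^ 2) * ψ (b * ∑ x ∈ S, x) := by
        intro a b
        rw [← AddChar.map_add_eq_mul, Finset.mul_sum, Finset.mul_sum, ← Finset.sum_add_distrib,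
          ]
        exact (map_prod ψ.toMonoidHom (fun x => Multiplicative.ofAdd (a * x ^ 2 + b * x)) S).symm
      simp only [e2]
      simp only [← Finset.mul_sum, ← Finset.sum_mul]
      rw [AddChar.sum_mulShift _ hψ, AddChar.sum_mulShift _ hψ, hcard]
      by_cases u : ∑ x ∈ S, x ^ 2 = 0 <;> by_cases w : ∑ x ∈ S, x = 0
      · rw [if_pos u, if_pos w, if_pos ⟨w, u⟩]; push_cast; ring
      all_goals simp [u, w]
    simp only [hE]
    rw [Finset.sum_congr rfl fun a _ => Finset.sum_comm, Finset.sum_comm]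
    rw [Finset.sum_congr rfl fun S _ => e1 S, ← Finset.sum_filter, Finset.sum_const, nsmul_eq_mul,
      mul_comm]
    congr 3
    ext S
    simp [Finset.mem_powersetCard]
  have hE00 : E (fun x => ψ (0 * x ^ 2 + 0 * x)) = (s ^ 2).choose n := by
    simp [hE, ← hcard, Finset.card_univ]
  have hE0b : ∀ b, b ≠ 0 → E (fun x => ψ (0 * x ^ 2 + b * x)) = 0 := by
    intro b hb
    obtain ⟨y, hy⟩ := AddChar.ne_one_iff.1 (hψ (mul_ne_zero hn0 hb))
    have := aux_E_shift (fun x => ψ (0 * x ^ 2 + b * x)) (fun x => ψ (0 * x ^ 2 + b * x)) y (ψ (b * y)) n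
      (by intro x; rw [← AddChar.map_add_eq_mul]; congr 1; ring)
    rw [← AddChar.map_nsmul_eq_pow, nsmul_eq_mul, ← mul_assoc] at this
    rw [AddChar.mulShift_apply] at hy
    by_contra hne
    exact hy (mul_right_cancel₀ hne (this.symm.trans (one_mul _).symm))
  have hEa : ∀ a, a ≠ 0 → ∑ b, E (fun x => ψ (a * x ^ 2 + b * x)) =
      (quadraticChar F a : ℂ) * G * E (fun x => ψ (a * x ^ 2)) := by
    intro a ha
    have e1 : ∀ b, E (fun x => ψ (a * x ^ 2 + b * x)) =
        ψ ((-n / (4 * a)) * b ^ 2) * E (fun x => ψ (a * x ^ 2)) := by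
      intro b
      have := aux_E_shift (fun x => ψ (a * x ^ 2 + b * x)) (fun x => ψ (a * x ^ 2))
        (- b / (2 * a)) (ψ (- b ^ 2 / (4 * a))) n
        (by
          intro x; rw [← AddChar.map_add_eq_mul]; congr 1
          have : (4 : F) = 2 * 2 := by norm_num
          rw [this]
          field_simp
          ring)
      rw [← AddChar.map_nsmul_eq_pow, nsmul_eq_mul] at this
      rw [hE]
      simp only []
      rw [this]
      congr 2
      ring
    rw [Finset.sum_congr rfl fun b _ => e1 b, ← Finset.sum_mul]
    have h40 : (4 : F) ≠ 0 := by
      have : (4 : F) = 2 * 2 := by norm_num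
      rw [this]
      exact mul_ne_zero h20 h20
    rw [aux_quadsum hF ψ hψ _ (div_ne_zero (neg_ne_zero.2 hn0) (mul_ne_zero h40 ha))]
    congr 3
    have hn : quadraticChar F (-n) = 1 := by
      apply aux_square hF s hsodd hcard _ (neg_ne_zero.2 hn0)
      rw [hsodd.neg_pow, hfrob]
    have h5 : (-n / (4 * a) : F) = (-n) * (a * ((2 * a)⁻¹) ^ 2) := by
      have : (4 : F) = 2 * 2 := by norm_num
      rw [this]
      field_simp
    rw [h5, map_mul, map_mul, hn, map_pow, quadraticChar_sq_one (inv_ne_zero (mul_ne_zero h20 ha)), one_mul, mul_one]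
  have hEval : ∀ a, a ≠ 0 → (quadraticChar F a : ℂ) * G * E (fun x => ψ (a * x ^ 2)) =
      s * (α - β) / 2 + (quadraticChar F a : ℂ) * (G * (α + β) / 2) := by
    intro a ha
    have hsum := aux_quadsum hF ψ hψ a ha
    rw [← hχ, ← hG] at hsum
    have hH : ((quadraticChar F a : ℂ) * G) ^ 2 = (s : ℂ) ^ 2 := by
      have : (quadraticChar F a : ℂ) ^ 2 = 1 := by exact_mod_cast quadraticChar_sq_one ha
      rw [mul_pow, this, hG2, one_mul]
    have hEc := aux_esymm (fun x : F => ψ (a * x ^ 2)) n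
    rw [show (quadraticChar F a : ℂ) * (G * (α + β) / 2) = (quadraticChar F a : ℂ) * G * (α + β) / 2 by ring]
    simp only [hE]
    rw [← hEc]
    rcases sq_eq_sq_iff_eq_or_eq_neg.1 hH with h | h
    · obtain ⟨N, hN1, hN2⟩ := aux_key p hp hodd (fun x : F => ψ (a * x ^ 2)) (fun x => hψp _) s 0
        (by rw [hsum, h]; simp)
      rw [pow_zero, one_mul] at hN1
      rw [hN1, hα N (by rw [hN2, hcard]; rfl), h]
      ring
    · obtain ⟨N, hN1, hN2⟩ := aux_key p hp hodd (fun x : F => ψ (a * x ^ 2)) (fun x => hψp _) 0 s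
        (by rw [hsum, h]; simp)
      rw [pow_zero, one_mul] at hN1
      have hinv := aux_inv_s17 s hs0
      have : ∏ x, ((1 : PowerSeries ℂ) + PowerSeries.C (ψ (a * x ^ 2)) * PowerSeries.X) = 
        (PowerSeries.mk fun i => (-1 : ℂ) ^ i * ((s - 1 + i).choose (s - 1) : ℂ)) * (1 + PowerSeries.X ^ p) ^ N := by
        rw [← hN1, ← mul_assoc, mul_comm (PowerSeries.mk _), hinv, one_mul]
      rw [this, hβ N (by rw [← hcard, ← hN2]; rfl), h]
      ring
  rw [hcount, ← Finset.add_sum_erase _ _ (Finset.mem_univ (0 : F))]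
  congr 1
  · rw [Finset.sum_eq_single 0 (fun b _ hb => hE0b b hb) (by simp), hE00]
  · rw [Finset.sum_congr rfl fun a ha => (hEa a (Finset.ne_of_mem_erase ha)).trans (hEval a (Finset.ne_of_mem_erase ha))]
    rw [Finset.sum_add_distrib, ← Finset.sum_mul, Finset.sum_const, Finset.card_erase_of_mem (Finset.mem_univ _), Finset.card_univ, hcard, nsmul_eq_mul]
    have hz : ∑ a ∈ Finset.univ.erase (0 : F), (quadraticChar F a : ℂ) = 0 := by
      have := quadraticChar_sum_zero hF
      rw [← Finset.add_sum_erase _ _ (Finset.mem_univ (0 : F)), MulChar.map_zero, zero_add] at this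
      exact_mod_cast this
    rw [hz, zero_mul, add_zero, Nat.cast_sub (Nat.one_le_pow _ _ hs0)]
    push_cast
    ring


theorem stmt_17 (p e q s n : ℕ) (hp : p.Prime) (hodd : Odd p) (he : 0 < e)
    (hq : q = p ^ (2 * e)) (hs : s = p ^ e)
    (F : Type*) [Field F] [Fintype F] (hF : Fintype.card F = q)
    (hn1 : 1 ≤ n) (hnq : n ≤ q) (hpn : ¬ p ∣ n) :
    (Nat.card {S : Finset F //
        S.card = n ∧ (∑ x ∈ S, x) = 0 ∧ (∑ x ∈ S, x ^ 2) = 0} : ℚ)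
      = (1 / (q : ℚ) ^ 2) * (q.choose n)
        + (((q : ℚ) - 1) / (2 * (s : ℚ) ^ 3)) *
          ((∑ ij ∈ (Finset.range (n + 1) ×ˢ Finset.range (n + 1)).filter
              (fun ij => ij.1 + p * ij.2 = n ∧ ij.1 ≤ s),
            ((s.choose ij.1 : ℚ) * (((q - s) / p).choose ij.2 : ℚ)))
          - (-1 : ℚ) ^ n *
            ∑ ij ∈ (Finset.range (n + 1) ×ˢ Finset.range (n + 1)).filter
                (fun ij => ij.1 + p * ij.2 = n),
              (-1 : ℚ) ^ ij.2 * ((s - 1 + ij.1).choose (s - 1) : ℚ)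
                * (((q + s) / p).choose ij.2 : ℚ)) := by
  classical
  have hs0 : 0 < s := hs ▸ pow_pos hp.pos e
  have hsodd : Odd s := hs ▸ hodd.pow
  have hqs : q = s ^ 2 := by rw [hq, hs, ← pow_mul, mul_comm]
  have hpf : Fact p.Prime := ⟨hp⟩
  have hchar : CharP F p := by
    have h := FiniteField.cast_card_eq_zero F
    rw [hF, hq] at h
    push_cast at h
    exact (CharP.charP_iff_prime_eq_zero hp).2 (pow_eq_zero_iff (by omega) |>.1 h)
  have hfrob : ∀ m : ℕ, (m : F) ^ s = m := by
    intro m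
    rw [hs, ← iterateFrobenius_def p e (m : F), map_natCast]
  have hdvd : p ∣ s := hs ▸ dvd_pow_self p (by omega)
  have hmain := aux_main (F := F) p s n hp hodd hchar hsodd hs0 (hF.trans hqs) hfrob hpn
    (∑ ij ∈ (Finset.range (n + 1) ×ˢ Finset.range (n + 1)).filter
              (fun ij => ij.1 + p * ij.2 = n ∧ ij.1 ≤ s),
            ((s.choose ij.1 : ℂ) * (((q - s) / p).choose ij.2 : ℂ)))
    ((-1 : ℂ) ^ n *
            ∑ ij ∈ (Finset.range (n + 1) ×ˢ Finset.range (n + 1)).filter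
                (fun ij => ij.1 + p * ij.2 = n),
              (-1 : ℂ) ^ ij.2 * ((s - 1 + ij.1).choose (s - 1) : ℂ)
                * (((q + s) / p).choose ij.2 : ℂ))
    (by
      intro N hN
      have hNe : (q - s) / p = N := by
        rw [hqs, ← hN, Nat.add_sub_cancel, Nat.mul_div_cancel_left _ hp.pos]
      rw [aux_coeff _ _ _ _ hp.pos, hNe, ← Finset.filter_filter]
      rw [Finset.sum_filter (fun ij : ℕ × ℕ => ij.1 ≤ s)]
      refine Finset.sum_congr rfl fun ij _ => ?_
      have hco : PowerSeries.coeff ij.1 ((1 + PowerSeries.X : PowerSeries ℂ) ^ s) = s.choose ij.1 := by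
        have := Polynomial.coeff_one_add_X_pow ℂ s ij.1
        rw [← this, ← Polynomial.coeff_coe]
        simp
      rw [hco]
      split_ifs with h
      · rfl
      · rw [Nat.choose_eq_zero_of_lt (by omega)]
        simp)
    (by
      intro N hN
      have hNe : (q + s) / p = N := by
        rw [hqs, ← hN, Nat.mul_div_cancel_left _ hp.pos]
      rw [aux_coeff _ _ _ _ hp.pos, hNe, Finset.mul_sum]
      refine Finset.sum_congr rfl fun ij hij => ?_
      have h1 := (Finset.mem_filter.1 hij).2
      have h2 : (-1 : ℂ) ^ ij.1 = (-1) ^ n * (-1) ^ ij.2 := by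
        rw [← h1, pow_add, pow_mul, hodd.neg_one_pow, mul_assoc, ← mul_pow]
        simp
      rw [PowerSeries.coeff_mk, h2]
      ring)
  have hcardeq : Nat.card {S : Finset F //
        S.card = n ∧ (∑ x ∈ S, x) = 0 ∧ (∑ x ∈ S, x ^ 2) = 0} =
      ((Finset.univ : Finset (Finset F)).filter fun S =>
      S.card = n ∧ (∑ x ∈ S, x) = 0 ∧ (∑ x ∈ S, x ^ 2) = 0).card := by
    rw [Nat.card_eq_fintype_card, Fintype.card_subtype]
  rw [← hcardeq, ← hqs] at hmain
  have hs0' : (s : ℚ) ≠ 0 := by exact_mod_cast hs0.ne'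
  have hmainQ : (s : ℚ) ^ 4 * (Nat.card {S : Finset F //
        S.card = n ∧ (∑ x ∈ S, x) = 0 ∧ (∑ x ∈ S, x ^ 2) = 0} : ℚ) = 
      (q.choose n : ℚ) + ((s : ℚ) ^ 2 - 1) * s * ((∑ ij ∈ (Finset.range (n + 1) ×ˢ Finset.range (n + 1)).filter
              (fun ij => ij.1 + p * ij.2 = n ∧ ij.1 ≤ s),
            ((s.choose ij.1 : ℚ) * (((q - s) / p).choose ij.2 : ℚ)))
          - (-1 : ℚ) ^ n *
            ∑ ij ∈ (Finset.range (n + 1) ×ˢ Finset.range (n + 1)).filter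
                (fun ij => ij.1 + p * ij.2 = n),
              (-1 : ℚ) ^ ij.2 * ((s - 1 + ij.1).choose (s - 1) : ℚ)
                * (((q + s) / p).choose ij.2 : ℚ)) / 2 := by
    have hinj : Function.Injective ((↑) : ℚ → ℂ) := Rat.cast_injective
    apply hinj
    push_cast
    exact hmain
  have hq' : (q : ℚ) = (s : ℚ) ^ 2 := by rw [hqs]; push_cast; rfl
  rw [hq']
  generalize (∑ ij ∈ (Finset.range (n + 1) ×ˢ Finset.range (n + 1)).filter
              (fun ij => ij.1 + p * ij.2 = n ∧ ij.1 ≤ s),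
            ((s.choose ij.1 : ℚ) * (((q - s) / p).choose ij.2 : ℚ)))
          - (-1 : ℚ) ^ n *
            ∑ ij ∈ (Finset.range (n + 1) ×ˢ Finset.range (n + 1)).filter
                (fun ij => ij.1 + p * ij.2 = n),
              (-1 : ℚ) ^ ij.2 * ((s - 1 + ij.1).choose (s - 1) : ℚ)
                * (((q + s) / p).choose ij.2 : ℚ) = T at hmainQ ⊢
  apply mul_left_cancel₀ (pow_ne_zero 4 hs0')
  rw [hmainQ]
  field_simp
end
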